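/- Let G be a finite simple graph, let T > 0 be the number of 4-cycles of G, and let η > 0 be a real number. Call an edge of G bad if it is contained in at least η·√T 4-cycles of G, and good otherwise. Then the number of 4-cycles of G that contain at most one bad edge is at least (1 − 82/η)·T. -/

import Mathlib

/-- A 4-cycle of a simple graph `G`: an unordered pair `{{u,v},{a,b}}` of
disjoint unordered pairs of distinct vertices such that each of `u`, `v` is
adjacent to each of `a`, `b`. -/
def IsFourCycle {V : Type*} (G : SimpleGraph V) (c : Sym2 (Sym2 V)) : Prop :=
  ∃ u v a b : V, c = s(s(u, v), s(a, b)) ∧ u ≠ v ∧ a ≠ b ∧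
    u ≠ a ∧ u ≠ b ∧ v ≠ a ∧ v ≠ b ∧
    G.Adj u a ∧ G.Adj u b ∧ G.Adj v a ∧ G.Adj v b

/-- `e` is one of the four edges of the 4-cycle `c = {{u,v},{a,b}}`, i.e. an
unordered pair with one endpoint in each part of `c`. -/
def IsCycleEdge {V : Type*} (c : Sym2 (Sym2 V)) (e : Sym2 V) : Prop :=
  ∃ p q : Sym2 V, c = s(p, q) ∧ ∃ x y, x ∈ p ∧ y ∈ q ∧ e = s(x, y)

/-- An edge is bad (for threshold `η·√T`) if it is contained in at least
`η·√T` 4-cycles of `G`. -/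
def IsBadEdge {V : Type*} (G : SimpleGraph V) (η : ℝ) (T : ℕ) (e : Sym2 V) : Prop :=
  η * Real.sqrt T ≤ ({c | IsFourCycle G c ∧ IsCycleEdge c e}.ncard : ℝ)

/-!
Every 4-cycle is counted through its at most eight labellings `((u, v), (a, b))`. Each bad dart
leads at least `η√T` labellings, so the number `d` of bad darts is at most `8√T / η`.

A 4-cycle with two bad edges has a labelling in which `ua` and `vb` are bad, or one in which `ua`
and `va` are bad. The first kind of labelling is determined by two bad darts, so there are at most
`d²` of them. For the second kind, fix `(u, v)` and let `x` and `w` count the common neighbours of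
`u` and `v`, and those joined to both by bad edges: there are `w (x - 1)` labellings of this kind,
out of `x (x - 1)` in all. The sum of `w²` over `(u, v)` is at most `d²` because `w²` counts pairs
of bad darts `(u, a)`, `(v, a')`, so Cauchy–Schwarz gives at most `d √(8T)` labellings.
-/

section Labellings

open Finset

variable {V : Type*}

/-- The pair of pairs `{{u, v}, {a, b}}` labelled by `((u, v), (a, b))`. Labellings are grouped by
diagonals, so that fixing the first component fixes the diagonal `{u, v}`. -/
def unlabel (t : (V × V) × (V × V)) : Sym2 (Sym2 V) :=
  s(s(t.1.1, t.1.2), s(t.2.1, t.2.2))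

/-- The labelled 4-cycles of `G`; every 4-cycle occurs once for each of its labellings. -/
def labelledFourCycles (G : SimpleGraph V) : Set ((V × V) × (V × V)) :=
  {t | IsFourCycle G (unlabel t)}

/-- The dart from `u` to `a` in the labelled 4-cycle `((u, v), (a, b))`. -/
def leadDart (t : (V × V) × (V × V)) : V × V :=
  (t.1.1, t.2.1)

lemma isFourCycle_mk_iff {G : SimpleGraph V} {u v a b : V} :
    IsFourCycle G s(s(u, v), s(a, b)) ↔
      u ≠ v ∧ a ≠ b ∧ G.Adj u a ∧ G.Adj u b ∧ G.Adj v a ∧ G.Adj v b := by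
  constructor
  · rintro ⟨u', v', a', b', h, huv, hab, -, -, -, -, hua, hub, hva, hvb⟩
    simp only [Sym2.eq_iff] at h
    grind [SimpleGraph.adj_comm]
  · rintro ⟨huv, hab, hua, hub, hva, hvb⟩
    exact ⟨u, v, a, b, rfl, huv, hab, hua.ne, hub.ne, hva.ne, hvb.ne, hua, hub, hva, hvb⟩

lemma isCycleEdge_iff_exists_labelling {c : Sym2 (Sym2 V)} {e : Sym2 V} :
    IsCycleEdge c e ↔ ∃ u v a b, c = s(s(u, v), s(a, b)) ∧ e = s(u, a) := by
  constructor
  · rintro ⟨_, _, rfl, u, a, ⟨v, rfl⟩, ⟨b, rfl⟩, rfl⟩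
    exact ⟨u, v, a, b, rfl, rfl⟩
  · rintro ⟨u, v, a, b, rfl, rfl⟩
    exact ⟨_, _, rfl, u, a, Sym2.mem_mk_left u v, Sym2.mem_mk_left a b, rfl⟩

lemma isCycleEdge_mk_iff {u v a b : V} {e : Sym2 V} :
    IsCycleEdge s(s(u, v), s(a, b)) e ↔
      e = s(u, a) ∨ e = s(u, b) ∨ e = s(v, a) ∨ e = s(v, b) := by
  constructor
  · rintro ⟨p, q, h, x, y, hx, hy, rfl⟩
    rcases Sym2.eq_iff.1 h with ⟨rfl, rfl⟩ | ⟨rfl, rfl⟩ <;>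
      rcases Sym2.mem_iff.1 hx with rfl | rfl <;>
      rcases Sym2.mem_iff.1 hy with rfl | rfl <;>
      simp only [Sym2.eq_swap, true_or, or_true]
  · rintro (rfl | rfl | rfl | rfl) <;>
      exact ⟨_, _, rfl, _, _, by simp, by simp, rfl⟩

lemma exists_leadDart_eq_of_isCycleEdge {c : Sym2 (Sym2 V)} {x y : V}
    (h : IsCycleEdge c s(x, y)) : ∃ t, unlabel t = c ∧ leadDart t = (x, y) := by
  obtain ⟨u, v, a, b, rfl, he⟩ := isCycleEdge_iff_exists_labelling.1 h
  rcases Sym2.eq_iff.1 he with ⟨rfl, rfl⟩ | ⟨rfl, rfl⟩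
  · exact ⟨((x, v), (y, b)), rfl, rfl⟩
  · exact ⟨((x, b), (y, v)), Sym2.eq_swap, rfl⟩

lemma exists_labelling_of_isCycleEdge_of_ne {c : Sym2 (Sym2 V)} {e f : Sym2 V}
    (he : IsCycleEdge c e) (hf : IsCycleEdge c f) (hef : e ≠ f) :
    ∃ u v a b, c = s(s(u, v), s(a, b)) ∧ e = s(u, a) ∧ (f = s(v, a) ∨ f = s(v, b)) := by
  obtain ⟨u, v, a, b, rfl, rfl⟩ := isCycleEdge_iff_exists_labelling.1 he
  rcases isCycleEdge_mk_iff.1 hf with rfl | rfl | hva | hvb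
  · exact absurd rfl hef
  · exact ⟨a, b, u, v, Sym2.eq_swap, Sym2.eq_swap, .inl Sym2.eq_swap⟩
  · exact ⟨u, v, a, b, rfl, rfl, .inl hva⟩
  · exact ⟨u, v, a, b, rfl, rfl, .inr hvb⟩

/-- The eight labellings equivalent to `t` under the symmetries of the 4-cycle, with repetitions
removed when `t` is degenerate. -/
def relabellings [DecidableEq V] : (V × V) × (V × V) → Finset ((V × V) × (V × V))
  | ((u, v), (a, b)) =>
    [((u, v), (a, b)), ((v, u), (a, b)), ((u, v), (b, a)), ((v, u), (b, a)),
     ((a, b), (u, v)), ((b, a), (u, v)), ((a, b), (v, u)), ((b, a), (v, u))].toFinset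

lemma card_relabellings_le [DecidableEq V] (t : (V × V) × (V × V)) : #(relabellings t) ≤ 8 :=
  List.toFinset_card_le _

lemma mem_relabellings_of_unlabel_eq [DecidableEq V] {s t : (V × V) × (V × V)}
    (h : unlabel s = unlabel t) : s ∈ relabellings t := by
  simp only [unlabel, Sym2.eq_iff] at h
  rcases h with ⟨h₁ | h₁, h₂ | h₂⟩ | ⟨h₁ | h₁, h₂ | h₂⟩ <;>
    simp [relabellings, Prod.ext_iff, h₁, h₂]

lemma unlabel_surjective : Function.Surjective (unlabel (V := V)) := by
  rintro ⟨⟨u, v⟩, ⟨a, b⟩⟩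
  exact ⟨((u, v), (a, b)), rfl⟩

lemma card_le_eight_mul_of_mapsTo_unlabel {H : Finset ((V × V) × (V × V))}
    {C : Finset (Sym2 (Sym2 V))} (hHC : ∀ t ∈ H, unlabel t ∈ C) : #H ≤ 8 * #C := by
  classical
  refine card_le_mul_card_image_of_maps_to hHC 8 fun c _ => ?_
  obtain ⟨s, rfl⟩ := unlabel_surjective c
  refine (card_le_card fun t ht => ?_).trans (card_relabellings_le s)
  exact mem_relabellings_of_unlabel_eq (mem_filter.1 ht).2

lemma finite_preimage_unlabel {C : Set (Sym2 (Sym2 V))} (hC : C.Finite) :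
    (unlabel ⁻¹' C).Finite := by
  classical
  refine hC.preimage' fun c _ => ?_
  obtain ⟨s, rfl⟩ := unlabel_surjective c
  exact (relabellings s).finite_toSet.subset fun _ ht => mem_relabellings_of_unlabel_eq ht

lemma card_offDiag_filter_fst_mem {β : Type*} [DecidableEq β] {X W : Finset β}
    (hW : W ⊆ X) : #{q ∈ X.offDiag | q.1 ∈ W} = #W * (#X - 1) := by
  have hsigma : #{q ∈ X.offDiag | q.1 ∈ W} = #(W.sigma fun a => X.erase a) := by
    refine card_bij' (fun q _ => ⟨q.1, q.2⟩) (fun q _ => (q.1, q.2)) ?_ ?_ ?_ ?_ <;> grind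
  rw [hsigma, card_sigma, sum_congr rfl fun a ha => card_erase_of_mem (hW ha), sum_const,
    smul_eq_mul]

lemma card_offDiag_filter_fst_mem_sq_le {β : Type*} [DecidableEq β] {X W : Finset β}
    (hW : W ⊆ X) : #{q ∈ X.offDiag | q.1 ∈ W} ^ 2 ≤ #W ^ 2 * #X.offDiag := by
  have hX : #X.offDiag = (#X - 1) * #X := by rw [offDiag_card, Nat.sub_one_mul]
  rw [card_offDiag_filter_fst_mem hW, mul_pow, hX, sq (#X - 1)]
  gcongr
  exact Nat.sub_le _ _

section Quadruples

variable {α β : Type*} [DecidableEq α] [DecidableEq β]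

/-- The quadruples `((u, v), (a, b))` in `H` such that `D` relates both `u` and `v` to `a`: for
labelled 4-cycles, those in which the edges `ua` and `va`, meeting at `a`, are selected. -/
def withAdjacentPair (H : Finset ((α × α) × (β × β))) (D : Finset (α × β)) :
    Finset ((α × α) × (β × β)) :=
  {t ∈ H | (t.1.1, t.2.1) ∈ D ∧ (t.1.2, t.2.1) ∈ D}

/-- The quadruples `((u, v), (a, b))` in `H` such that `D` relates `u` to `a` and `v` to `b`: for
labelled 4-cycles, those in which the opposite edges `ua` and `vb` are selected. -/
def withOppositePair (H : Finset ((α × α) × (β × β))) (D : Finset (α × β)) :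
    Finset ((α × α) × (β × β)) :=
  {t ∈ H | (t.1.1, t.2.1) ∈ D ∧ (t.1.2, t.2.2) ∈ D}

lemma card_withOppositePair_le (H : Finset ((α × α) × (β × β))) (D : Finset (α × β)) :
    #(withOppositePair H D) ≤ #D ^ 2 := by
  rw [sq, ← card_product]
  refine card_le_card_of_injOn (fun t => ((t.1.1, t.2.1), (t.1.2, t.2.2))) ?_ ?_
  · intro t ht
    exact mem_coe.2 (mem_product.2 (mem_filter.1 ht).2)
  · intro s _ t _ hst
    simp only [Prod.mk.injEq] at hst
    exact Prod.ext (Prod.ext hst.1.1 hst.2.1) (Prod.ext hst.1.2 hst.2.2)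

lemma sum_card_filter_pair_mem_sq_le (P : Finset (α × α)) (X : α × α → Finset β)
    (D : Finset (α × β)) :
    ∑ p ∈ P, #{a ∈ X p | (p.1, a) ∈ D ∧ (p.2, a) ∈ D} ^ 2 ≤ #D ^ 2 := by
  simp only [sq, ← card_product]
  rw [← card_sigma]
  refine card_le_card_of_injOn (fun t => ((t.1.1, t.2.1), (t.1.2, t.2.2))) ?_ ?_
  · intro t ht
    simp only [coe_sigma, Set.mem_sigma_iff, mem_coe, mem_product, mem_filter] at ht ⊢
    exact ⟨ht.2.1.2.1, ht.2.2.2.2⟩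
  · rintro ⟨⟨u, v⟩, a, b⟩ _ ⟨⟨u', v'⟩, a', b'⟩ _ hst
    simp only [Prod.mk.injEq] at hst
    obtain ⟨⟨rfl, rfl⟩, rfl, rfl⟩ := hst
    rfl

lemma card_withAdjacentPair_sq_le {H : Finset ((α × α) × (β × β))} {X : α × α → Finset β}
    (hX : ∀ p q, (p, q) ∈ H ↔ q ∈ (X p).offDiag) (D : Finset (α × β)) :
    #(withAdjacentPair H D) ^ 2 ≤ #D ^ 2 * #H := by
  set W : α × α → Finset β := fun p => {a ∈ X p | (p.1, a) ∈ D ∧ (p.2, a) ∈ D}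
  have hfiberH (p : α × α) : #{t ∈ H | t.1 = p} = #(X p).offDiag :=
    card_bij' (fun t _ => t.2) (fun q _ => (p, q)) (by grind) (by grind) (by grind) (by grind)
  have hfiberA (p : α × α) :
      #{t ∈ withAdjacentPair H D | t.1 = p} = #{q ∈ (X p).offDiag | q.1 ∈ W p} :=
    card_bij' (fun t _ => t.2) (fun q _ => (p, q)) (by grind [withAdjacentPair])
      (by grind [withAdjacentPair]) (by grind) (by grind)
  have hH : Set.MapsTo Prod.fst (H : Set ((α × α) × (β × β))) (H.image Prod.fst) :=
    fun t ht => mem_image_of_mem _ ht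
  have hA : Set.MapsTo Prod.fst (withAdjacentPair H D : Set ((α × α) × (β × β)))
      (H.image Prod.fst) :=
    fun t ht => hH (filter_subset _ _ ht)
  calc #(withAdjacentPair H D) ^ 2
      = (∑ p ∈ H.image Prod.fst, #{q ∈ (X p).offDiag | q.1 ∈ W p}) ^ 2 := by
        simp only [card_eq_sum_card_fiberwise hA, hfiberA]
    _ ≤ (∑ p ∈ H.image Prod.fst, #(W p) ^ 2) * ∑ p ∈ H.image Prod.fst, #(X p).offDiag :=
        sum_sq_le_sum_mul_sum_of_sq_le_mul _ (fun _ _ => Nat.zero_le _) (fun _ _ => Nat.zero_le _)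
          fun p _ => card_offDiag_filter_fst_mem_sq_le (filter_subset _ _)
    _ ≤ #D ^ 2 * #H := by
        rw [card_eq_sum_card_fiberwise hH]
        simp only [hfiberH]
        gcongr
        exact sum_card_filter_pair_mem_sq_le _ X D

end Quadruples

lemma exists_commonNeighbors_offDiag {G : SimpleGraph V} {H : Finset ((V × V) × (V × V))}
    (hH : ∀ t, t ∈ H ↔ t ∈ labelledFourCycles G) :
    ∃ X : V × V → Finset V, ∀ p q, (p, q) ∈ H ↔ q ∈ (X p).offDiag := by
  classical
  have hmem (u v a b : V) : ((u, v), (a, b)) ∈ H ↔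
      u ≠ v ∧ a ≠ b ∧ G.Adj u a ∧ G.Adj u b ∧ G.Adj v a ∧ G.Adj v b :=
    (hH _).trans isFourCycle_mk_iff
  -- `G.commonNeighbors u u` may be infinite, so only common neighbours occurring in `H` are taken.
  refine ⟨fun p => {t ∈ H | t.1 = p}.image (·.2.1), fun ⟨u, v⟩ ⟨a, b⟩ => ?_⟩
  simp only [mem_offDiag, mem_image, mem_filter, Prod.exists, hmem]
  grind

lemma ncard_le_card_of_subset_image {α β : Type*} {f : α → β} {S : Set β} {F : Finset α}
    (h : S ⊆ f '' F) : S.ncard ≤ #F :=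
  (Set.ncard_le_ncard h (F.finite_toSet.image f)).trans
    ((Set.ncard_image_le F.finite_toSet).trans_eq (Set.ncard_coe_finset F))

lemma card_mul_le_card_labelledFourCycles {G : SimpleGraph V} {H : Finset ((V × V) × (V × V))}
    (hH : ∀ t ∈ labelledFourCycles G, t ∈ H) {D : Finset (V × V)} {r : ℝ}
    (hD : ∀ d ∈ D, r ≤ {c | IsFourCycle G c ∧ IsCycleEdge c s(d.1, d.2)}.ncard) :
    #D * r ≤ #H := by
  classical
  have hfiber (d : V × V) (hd : d ∈ D) : r ≤ #{t ∈ H | leadDart t = d} := by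
    refine (hD d hd).trans (mod_cast ncard_le_card_of_subset_image (f := unlabel) ?_)
    rintro c ⟨hc, hcd⟩
    obtain ⟨t, rfl, ht⟩ := exists_leadDart_eq_of_isCycleEdge hcd
    exact ⟨t, mem_coe.2 (mem_filter.2 ⟨hH t hc, ht⟩), rfl⟩
  calc #D * r ≤ ∑ d ∈ D, (#{t ∈ H | leadDart t = d} : ℝ) := by
        simpa only [nsmul_eq_mul] using card_nsmul_le_sum D _ r hfiber
    _ = #{t ∈ H | leadDart t ∈ D} := mod_cast sum_card_fiberwise_eq_card_filter H D leadDart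
    _ ≤ #H := mod_cast card_filter_le _ _

lemma ncard_fourCycle_nontrivial_edges_le [DecidableEq V] {G : SimpleGraph V}
    {H : Finset ((V × V) × (V × V))} (hH : ∀ t ∈ labelledFourCycles G, t ∈ H)
    {B : Set (Sym2 V)} {D : Finset (V × V)} (hD : ∀ x y, s(x, y) ∈ B → (x, y) ∈ D) :
    {c | IsFourCycle G c ∧ {e | IsCycleEdge c e ∧ e ∈ B}.Nontrivial}.ncard ≤
      #(withAdjacentPair H D) + #(withOppositePair H D) := by
  set M := {c | IsFourCycle G c ∧ {e | IsCycleEdge c e ∧ e ∈ B}.Nontrivial}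
  have hM : M ⊆ unlabel '' ↑(withAdjacentPair H D ∪ withOppositePair H D) := by
    rintro c ⟨hc, e, ⟨hce, he⟩, f, ⟨hcf, hf⟩, hef⟩
    obtain ⟨u, v, a, b, rfl, rfl, hfv⟩ := exists_labelling_of_isCycleEdge_of_ne hce hcf hef
    refine ⟨((u, v), (a, b)), mem_union.2 ?_, rfl⟩
    rcases hfv with rfl | rfl
    · exact .inl (mem_filter.2 ⟨hH _ hc, hD u a he, hD v a hf⟩)
    · exact .inr (mem_filter.2 ⟨hH _ hc, hD u a he, hD v b hf⟩)
  calc M.ncard ≤ #(withAdjacentPair H D ∪ withOppositePair H D) :=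
        ncard_le_card_of_subset_image hM
    _ ≤ #(withAdjacentPair H D) + #(withOppositePair H D) := card_union_le _ _

/-- The edges lying in at least `r` of the 4-cycles of `G`. -/
def heavyEdges (G : SimpleGraph V) (r : ℝ) : Set (Sym2 V) :=
  {e | r ≤ {c | IsFourCycle G c ∧ IsCycleEdge c e}.ncard}

lemma exists_leadDart_eq_of_mem_heavyEdges {G : SimpleGraph V} {r : ℝ} (hr : 0 < r) {x y : V}
    (h : s(x, y) ∈ heavyEdges G r) : ∃ t ∈ labelledFourCycles G, leadDart t = (x, y) := by
  have hpos : 0 < {c | IsFourCycle G c ∧ IsCycleEdge c s(x, y)}.ncard :=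
    mod_cast hr.trans_le h
  obtain ⟨c, hc, hcxy⟩ := Set.nonempty_of_ncard_ne_zero hpos.ne'
  obtain ⟨t, rfl, ht⟩ := exists_leadDart_eq_of_isCycleEdge hcxy
  exact ⟨t, hc, ht⟩

lemma ncard_fourCycle_nontrivial_heavyEdges_le {G : SimpleGraph V}
    (hfin : {c | IsFourCycle G c}.Finite) {T : ℕ} (hT : T = {c | IsFourCycle G c}.ncard)
    {r : ℝ} (hr : 0 < r) :
    ({c | IsFourCycle G c ∧ {e | IsCycleEdge c e ∧ e ∈ heavyEdges G r}.Nontrivial}.ncard : ℝ) ≤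
      8 * T / r * √(8 * T) + (8 * T / r) ^ 2 := by
  classical
  have hfinH : (labelledFourCycles G).Finite := finite_preimage_unlabel hfin
  set H := hfinH.toFinset
  set D : Finset (V × V) := {d ∈ H.image leadDart | s(d.1, d.2) ∈ heavyEdges G r}
  have hH : ∀ t, t ∈ H ↔ t ∈ labelledFourCycles G := fun _ => hfinH.mem_toFinset
  have hD : ∀ x y, s(x, y) ∈ heavyEdges G r → (x, y) ∈ D := by
    intro x y hxy
    obtain ⟨t, ht, hlead⟩ := exists_leadDart_eq_of_mem_heavyEdges hr hxy
    exact mem_filter.2 ⟨mem_image.2 ⟨t, (hH t).2 ht, hlead⟩, hxy⟩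
  have hcardH : (#H : ℝ) ≤ 8 * T := by
    rw [hT, Set.ncard_eq_toFinset_card _ hfin]
    exact_mod_cast card_le_eight_mul_of_mapsTo_unlabel (C := hfin.toFinset)
      fun t ht => hfin.mem_toFinset.2 ((hH t).1 ht)
  have hcardD : (#D : ℝ) ≤ 8 * T / r := by
    rw [le_div_iff₀ hr]
    exact (card_mul_le_card_labelledFourCycles (fun t => (hH t).2)
      fun d hd => (mem_filter.1 hd).2).trans hcardH
  have hadj : (#(withAdjacentPair H D) : ℝ) ≤ #D * √(#H) := by
    obtain ⟨X, hX⟩ := exists_commonNeighbors_offDiag hH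
    refine abs_le_of_sq_le_sq' ?_ (by positivity) |>.2
    rw [mul_pow, Real.sq_sqrt (Nat.cast_nonneg _)]
    exact_mod_cast card_withAdjacentPair_sq_le hX D
  have hopp : (#(withOppositePair H D) : ℝ) ≤ #D ^ 2 := mod_cast card_withOppositePair_le H D
  calc _ ≤ (#(withAdjacentPair H D) + #(withOppositePair H D) : ℝ) :=
        mod_cast ncard_fourCycle_nontrivial_edges_le (fun t => (hH t).2) hD
    _ ≤ #D * √(#H) + #D ^ 2 := add_le_add hadj hopp
    _ ≤ 8 * T / r * √(8 * T) + (8 * T / r) ^ 2 := by gcongr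

-- The constant works because `8√8 + 64 / 26 < 26`.
lemma heavyEdges_bound_le {η T : ℝ} (hη : 26 ≤ η) (hT : 0 ≤ T) :
    8 * T / (η * √T) * √(8 * T) + (8 * T / (η * √T)) ^ 2 ≤ 26 / η * T := by
  have : 0 < η := by linarith
  have hsq : √T ^ 2 = T := Real.sq_sqrt hT
  have hsqrt : √(8 * T) ≤ 29 / 10 * √T := by
    rw [Real.sqrt_le_left (by positivity), mul_pow, hsq]
    linarith
  have hdiv : 8 * T / (η * √T) = 8 * √T / η := by
    rw [mul_comm η, ← div_div, mul_div_assoc, Real.div_sqrt]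
  have hinv : 1 / η ≤ 1 / 26 := one_div_le_one_div_of_le (by norm_num) hη
  calc 8 * T / (η * √T) * √(8 * T) + (8 * T / (η * √T)) ^ 2
      ≤ 8 * √T / η * (29 / 10 * √T) + (8 * √T / η) ^ 2 := by rw [hdiv]; gcongr
    _ = (116 / 5 + 64 * (1 / η)) * (√T ^ 2 / η) := by ring
    _ ≤ 26 * (√T ^ 2 / η) := by gcongr; linarith
    _ = 26 / η * T := by rw [hsq]; ring

lemma ncard_le_ncard_le_one_add_ncard_nontrivial {α β : Type*} {S : Set α} (hS : S.Finite)
    (E : α → Set β) :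
    S.ncard ≤ {c | c ∈ S ∧ (E c).ncard ≤ 1}.ncard + {c | c ∈ S ∧ (E c).Nontrivial}.ncard := by
  refine (Set.ncard_le_ncard (fun c hc => ?_) ((hS.sep _).union (hS.sep _))).trans
    (Set.ncard_union_le _ _)
  obtain hle | hlt := le_or_gt (E c).ncard 1
  · exact .inl ⟨hc, hle⟩
  · exact .inr ⟨hc, (Set.one_lt_ncard_iff_nontrivial_and_finite.1 hlt).1⟩

end Labellings

theorem fourCycles_atMostOne_badEdge_general {V : Type*}
    (G : SimpleGraph V) (η : ℝ) (hη : 0 < η)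
    (T : ℕ) (hT : T = {c | IsFourCycle G c}.ncard) (hT0 : 0 < T) :
    (1 - 26 / η) * T ≤
      (({c | IsFourCycle G c ∧
          {e | IsCycleEdge c e ∧ IsBadEdge G η T e}.ncard ≤ 1}.ncard : ℝ)) := by
  obtain hη26 | hη26 := le_or_gt η 26
  · have hfactor : 1 - 26 / η ≤ 0 := sub_nonpos.2 ((one_le_div hη).2 hη26)
    exact (mul_nonpos_of_nonpos_of_nonneg hfactor T.cast_nonneg).trans (Nat.cast_nonneg _)
  have hTpos : (0 : ℝ) < T := mod_cast hT0
  have hfin : {c | IsFourCycle G c}.Finite := Set.finite_of_ncard_pos (hT ▸ hT0)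
  have hsplit : (T : ℝ) ≤
      {c | IsFourCycle G c ∧ {e | IsCycleEdge c e ∧ IsBadEdge G η T e}.ncard ≤ 1}.ncard +
      {c | IsFourCycle G c ∧ {e | IsCycleEdge c e ∧ IsBadEdge G η T e}.Nontrivial}.ncard :=
    mod_cast hT.trans_le (ncard_le_ncard_le_one_add_ncard_nontrivial hfin _)
  have hbad : ({c | IsFourCycle G c ∧
      {e | IsCycleEdge c e ∧ IsBadEdge G η T e}.Nontrivial}.ncard : ℝ) ≤ 26 / η * T :=
    (ncard_fourCycle_nontrivial_heavyEdges_le hfin hT (mul_pos hη (Real.sqrt_pos.2 hTpos))).trans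
      (heavyEdges_bound_le hη26.le hTpos.le)
  linarith

/-- Lemma 4 (McGregor–Vorotnikova): at least `(1 − 82/η)·T` of the `T`
4-cycles of `G` contain at most one bad edge. -/
theorem fourCycles_atMostOne_badEdge {V : Type*} [Fintype V]
    (G : SimpleGraph V) (η : ℝ) (hη : 0 < η)
    (T : ℕ) (hT : T = {c | IsFourCycle G c}.ncard) (hT0 : 0 < T) :
    (1 - 82 / η) * T ≤
      (({c | IsFourCycle G c ∧
          {e | IsCycleEdge c e ∧ IsBadEdge G η T e}.ncard ≤ 1}.ncard : ℝ)) :=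
  (by gcongr; norm_num : (1 - 82 / η) * T ≤ (1 - 26 / η) * T).trans
    (fourCycles_atMostOne_badEdge_general G η hη T hT hT0)
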